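/- Let p and q be coprime integers with q > 0 and p ≠ 0, and let σ ∈ PGL₂(ℚ) be given by σ(z) = (qz + p)/(pz − q) (an involution interchanging i and −i). Then for every algebraic number α with α ∉ {i, −i}, h(α) + h(σ(α)) ≥ log((|p| + q)/2). Moreover, if p + q is even, then equality holds for α = 1 and for α = −1. -/

import Mathlib

/- For a nonzero `f ∈ ℤ[X]`, the Mahler measure `M(f) = |a_n| ∏ max(|α_i|,1)`. -/
open Polynomial

noncomputable def mahlerMeasure (f : ℤ[X]) : ℝ :=
  |(f.leadingCoeff : ℝ)| *
    (((f.map (Int.castRingHom ℂ)).roots).map (fun z => max ‖z‖ 1)).prod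

/-- The primitive minimal polynomial over `ℤ` of an algebraic number. -/
noncomputable def intMinpoly (α : ℂ) : ℤ[X] :=
  (IsLocalization.integerNormalization (nonZeroDivisors ℤ) (minpoly ℚ α)).primPart

/-- The absolute logarithmic Weil height `h(α) = (1/n) log M(f)`. -/
noncomputable def height (α : ℂ) : ℝ :=
  Real.log (mahlerMeasure (intMinpoly α)) / (minpoly ℚ α).natDegree



/-!
Write `F` and `G` for the integral minimal polynomials of `α` and `σ α`, of common degree `n`. The
pullback of `F` along `σ` is `m G` with `m : ℤ`, and the bound
`((|p| + |q|) / 2) ^ n ≤ M(F) M(G)` combines an archimedean and a nonarchimedean estimate.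

* For `w : ℂ`, `(|p| + |q|) / 2 * |w ^ 2 + 1| ≤ max 1 |w| * max |q + p w| |p - q w|`. Multiplied
  over the factors `X + w` of `F` this gives `((|p| + |q|) / 2) ^ n * |F(i) F(-i)| ≤ |m| M(F) M(G)`.
* `m` divides `F(i) F(-i)` in `ℤ[i]`, hence `|m| ≤ |F(i) F(-i)|`. Indeed `i` is congruent to a
  rational integer `r` modulo `p + q i`, and up to a unimodular change of variables the pullback of
  `F` is the binary form of `F(r + (p ^ 2 + q ^ 2) X)`, so `m` divides this polynomial.
-/

section ArchimedeanEstimate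

lemma sq_max_eq_half {u v : ℝ} (hu : 0 ≤ u) (hv : 0 ≤ v) :
    max u v ^ 2 = (u ^ 2 + v ^ 2 + |u ^ 2 - v ^ 2|) / 2 := by
  rcases le_total u v with h | h
  · rw [max_eq_right h, abs_of_nonpos (sub_nonpos.2 (pow_le_pow_left₀ hu h 2))]; ring
  · rw [max_eq_left h, abs_of_nonneg (sub_nonneg.2 (pow_le_pow_left₀ hv h 2))]; ring

/-- This is `|sin (θ + ψ)| ≤ |cos θ| + |cos ψ|` with denominators cleared, where
`(d, y) = m (cos θ, sin θ)` and
`(a ^ 2 - b ^ 2, 2 a b) = (a ^ 2 + b ^ 2) (cos (θ + ψ), sin (θ + ψ))`. -/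
lemma two_mul_abs_mul_mul_le (a b : ℝ) {d y m : ℝ} (hm : 0 ≤ m) (hdy : d ^ 2 + y ^ 2 = m ^ 2) :
    2 * |a * b| * m ≤ (a ^ 2 + b ^ 2) * |d| + |(a ^ 2 - b ^ 2) * d + 2 * a * b * y| := by
  set E := (a ^ 2 - b ^ 2) * d + 2 * a * b * y
  set F := 2 * a * b * d - (a ^ 2 - b ^ 2) * y
  rcases hm.eq_or_lt with rfl | hm
  · rw [mul_zero]; positivity
  have hEF : E ^ 2 + F ^ 2 = ((a ^ 2 + b ^ 2) * m) ^ 2 := by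
    linear_combination (a ^ 2 + b ^ 2) ^ 2 * hdy
  have hFm : |F| ≤ (a ^ 2 + b ^ 2) * m :=
    abs_le_of_sq_le_sq (by linarith only [hEF, sq_nonneg E]) (by positivity)
  have hym : |y| ≤ m := abs_le_of_sq_le_sq (by linarith only [hdy, sq_nonneg d]) hm.le
  refine le_of_mul_le_mul_left ?_ hm
  calc m * (2 * |a * b| * m) = |d * F + y * E| := by
        rw [show d * F + y * E = 2 * m ^ 2 * (a * b) by rw [← hdy]; ring, abs_mul _ (a * b),
          abs_of_nonneg (a := 2 * m ^ 2) (by positivity)]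
        ring
    _ ≤ |d| * |F| + |y| * |E| := by
        simpa only [abs_mul] using abs_add_le (d * F) (y * E)
    _ ≤ |d| * ((a ^ 2 + b ^ 2) * m) + m * |E| := by gcongr
    _ = m * ((a ^ 2 + b ^ 2) * |d| + |E|) := by ring

lemma sq_abs_add_abs_mul_le (a b : ℝ) {d y m s : ℝ} (hm : 0 ≤ m)
    (hdy : d ^ 2 + y ^ 2 = m ^ 2) (hms : m ≤ s) :
    (|a| + |b|) ^ 2 * m ^ 2 ≤
      (s + |d|) * ((a ^ 2 + b ^ 2) * s + |(a ^ 2 - b ^ 2) * d + 2 * a * b * y|) := by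
  set E := (a ^ 2 - b ^ 2) * d + 2 * a * b * y
  have hs : 0 ≤ s + |d| := add_nonneg (hm.trans hms) (abs_nonneg d)
  calc (|a| + |b|) ^ 2 * m ^ 2 = (a ^ 2 + b ^ 2) * m ^ 2 + m * (2 * |a * b| * m) := by
        rw [add_sq, sq_abs, sq_abs, abs_mul]; ring
    _ ≤ (a ^ 2 + b ^ 2) * m ^ 2 + m * ((a ^ 2 + b ^ 2) * |d| + |E|) := by
        gcongr; exact two_mul_abs_mul_mul_le a b hm hdy
    _ ≤ (a ^ 2 + b ^ 2) * m ^ 2 + m * ((a ^ 2 + b ^ 2) * |d| + |E|) + |d| * |E| :=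
        le_add_of_nonneg_right (by positivity)
    _ = (m + |d|) * ((a ^ 2 + b ^ 2) * m + |E|) := by ring
    _ ≤ (s + |d|) * ((a ^ 2 + b ^ 2) * s + |E|) := by gcongr

lemma abs_add_abs_div_two_mul_norm_sq_add_one_le (a b : ℝ) (w : ℂ) :
    (|a| + |b|) / 2 * ‖w ^ 2 + 1‖ ≤
      max 1 ‖w‖ * max ‖(b + a * w : ℂ)‖ ‖(a - b * w : ℂ)‖ := by
  set d := ‖w‖ ^ 2 - 1 with hd
  have hw : ‖w‖ ^ 2 = w.re ^ 2 + w.im ^ 2 := by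
    rw [Complex.sq_norm, Complex.normSq_apply]; ring
  have hm : d ^ 2 + (2 * w.re) ^ 2 = ‖w ^ 2 + 1‖ ^ 2 := by
    rw [hd, hw, Complex.sq_norm, Complex.normSq_apply]
    simp only [pow_two, Complex.add_re, Complex.mul_re, Complex.one_re, Complex.add_im,
      Complex.mul_im, Complex.one_im, add_zero]
    ring
  have hms : ‖w ^ 2 + 1‖ ≤ ‖w‖ ^ 2 + 1 :=
    (norm_add_le _ _).trans_eq (by rw [norm_pow, norm_one])
  have hba : ‖(b + a * w : ℂ)‖ ^ 2 = b ^ 2 + a ^ 2 * ‖w‖ ^ 2 + 2 * a * b * w.re := by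
    rw [hw, Complex.sq_norm, Complex.normSq_apply]
    simp only [Complex.add_re, Complex.ofReal_re, Complex.mul_re, Complex.ofReal_im, zero_mul,
      sub_zero, Complex.add_im, Complex.mul_im, add_zero, zero_add]
    ring
  have hab : ‖(a - b * w : ℂ)‖ ^ 2 = a ^ 2 + b ^ 2 * ‖w‖ ^ 2 - 2 * a * b * w.re := by
    rw [hw, Complex.sq_norm, Complex.normSq_apply]
    simp only [Complex.sub_re, Complex.ofReal_re, Complex.mul_re, Complex.ofReal_im, zero_mul,
      sub_zero, Complex.sub_im, Complex.mul_im, add_zero, zero_sub]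
    ring
  refine le_of_sq_le_sq ?_ (by positivity)
  calc ((|a| + |b|) / 2 * ‖w ^ 2 + 1‖) ^ 2 = (|a| + |b|) ^ 2 * ‖w ^ 2 + 1‖ ^ 2 / 4 := by ring
    _ ≤ (‖w‖ ^ 2 + 1 + |d|) * ((a ^ 2 + b ^ 2) * (‖w‖ ^ 2 + 1) +
          |(a ^ 2 - b ^ 2) * d + 2 * a * b * (2 * w.re)|) / 4 :=
        div_le_div_of_nonneg_right (sq_abs_add_abs_mul_le a b (norm_nonneg _) hm hms) (by norm_num)
    _ = (max 1 ‖w‖ * max ‖(b + a * w : ℂ)‖ ‖(a - b * w : ℂ)‖) ^ 2 := by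
        rw [mul_pow, sq_max_eq_half zero_le_one (norm_nonneg _),
          sq_max_eq_half (norm_nonneg _) (norm_nonneg _), hba, hab, hd, abs_sub_comm (_ ^ 2) 1,
          one_pow]
        ring_nf

end ArchimedeanEstimate

section MoebiusPullback

/-- The pullback `(c x + d) ^ n * f ((a x + b) / (c x + d))`, `n = f.natDegree`, of a polynomial
`f` along a Möbius transformation, obtained by substituting into the binary form attached to
`f`. -/
noncomputable def moebiusPullback {R : Type*} [CommRing R] (a b c d : R) (f : R[X]) : R[X] :=
  MvPolynomial.aeval ![C a * X + C b, C c * X + C d] (f.homogenize f.natDegree)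

variable {R : Type*} [CommRing R] (a b c d : R)

lemma natDegree_moebiusPullback_le (f : R[X]) :
    (moebiusPullback a b c d f).natDegree ≤ f.natDegree := by
  rw [moebiusPullback]
  simpa using MvPolynomial.aeval_natDegree_le (n := 1) _ (isHomogeneous_homogenize f).totalDegree_le
    ![C a * X + C b, C c * X + C d]
    (Fin.forall_fin_two.2 ⟨natDegree_linear_le, natDegree_linear_le⟩)

@[simp]
lemma moebiusPullback_C (r : R) : moebiusPullback a b c d (C r) = C r := by
  simp [moebiusPullback, ← algebraMap_eq]

lemma moebiusPullback_X_add_C [Nontrivial R] (r : R) :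
    moebiusPullback a b c d (X + C r) = C (a + r * c) * X + C (b + r * d) := by
  have h_subst : C (a + r * c) * X + C (b + r * d) = C a * X + C b + C r * (C c * X + C d) := by
    simp only [map_add, map_mul]
    ring
  rw [h_subst]
  simp [moebiusPullback]

lemma moebiusPullback_mul [NoZeroDivisors R] {f g : R[X]} (hf : f ≠ 0) (hg : g ≠ 0) :
    moebiusPullback a b c d (f * g) = moebiusPullback a b c d f * moebiusPullback a b c d g := by
  rw [moebiusPullback, natDegree_mul hf hg, homogenize_mul f g le_rfl le_rfl, map_mul]
  rfl

lemma map_moebiusPullback {S : Type*} [CommRing S] {φ : R →+* S} (hφ : Function.Injective φ)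
    (f : R[X]) :
    (moebiusPullback a b c d f).map φ = moebiusPullback (φ a) (φ b) (φ c) (φ d) (f.map φ) := by
  rw [moebiusPullback, moebiusPullback, natDegree_map_eq_of_injective hφ, homogenize_map,
    MvPolynomial.aeval_def, MvPolynomial.aeval_def, MvPolynomial.eval₂_map, ← coe_mapRingHom,
    MvPolynomial.eval₂_comp_left]
  congr 1
  · ext : 1; simp [← algebraMap_eq]
  · ext i : 1
    fin_cases i <;> simp

lemma homogenize_moebiusPullback (f : R[X]) :
    (moebiusPullback a b c d f).homogenize f.natDegree =
      MvPolynomial.aeval ![.C a * .X 0 + .C b * .X 1, .C c * .X 0 + .C d * .X 1]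
        (f.homogenize f.natDegree) := by
  refine homogenize_eq_of_isHomogeneous ?_ ?_
  · have h_linear (u v : R) : (MvPolynomial.C u * MvPolynomial.X (0 : Fin 2) +
        MvPolynomial.C v * MvPolynomial.X 1).IsHomogeneous 1 :=
      ((MvPolynomial.isHomogeneous_X R 0).C_mul u).add ((MvPolynomial.isHomogeneous_X R 1).C_mul v)
    convert (isHomogeneous_homogenize f).aeval (n := 1) _ fun i ↦ ?_ using 1
    · rw [one_mul]
    · fin_cases i
      exacts [h_linear a b, h_linear c d]
  · rw [moebiusPullback, MvPolynomial.comp_aeval_apply]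
    congr 2
    ext i : 1
    fin_cases i <;> simp [← algebraMap_eq]

lemma aeval_moebiusPullback {K : Type*} [Field K] [Algebra R K] (f : R[X]) {x : K}
    (hx : algebraMap R K c * x + algebraMap R K d ≠ 0) :
    aeval x (moebiusPullback a b c d f) =
      aeval ((algebraMap R K a * x + algebraMap R K b) /
        (algebraMap R K c * x + algebraMap R K d)) f *
        (algebraMap R K c * x + algebraMap R K d) ^ f.natDegree := by
  have h_vec : (fun i ↦ aeval x ((![C a * X + C b, C c * X + C d] : Fin 2 → R[X]) i)) =
      ![algebraMap R K a * x + algebraMap R K b, algebraMap R K c * x + algebraMap R K d] := by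
    ext i
    fin_cases i <;> simp
  rw [moebiusPullback, MvPolynomial.comp_aeval_apply, h_vec, MvPolynomial.aeval_def,
    MvPolynomial.eval₂_eq_eval_map, ← homogenize_map, eval_homogenize natDegree_map_le _ hx,
    aeval_def, eval₂_eq_eval_map]
  rfl

lemma C_dvd_comp_of_C_dvd_moebiusPullback {f P Q : R[X]} {m : R}
    (h : C m ∣ moebiusPullback a b c d f) (hPQ : C c * P + C d * Q = 1) :
    C m ∣ f.comp (C a * P + C b * Q) := by
  obtain ⟨g, hg⟩ := h
  have h_hom := homogenize_moebiusPullback a b c d f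
  rw [hg, homogenize_C_mul] at h_hom
  have h_eval := congrArg (MvPolynomial.aeval ![P, Q]) h_hom
  rw [MvPolynomial.comp_aeval_apply, aeval_homogenize_of_eq_one le_rfl] at h_eval
  · exact ⟨_, by simpa [← algebraMap_eq, comp_eq_aeval] using h_eval.symm⟩
  · simpa [← algebraMap_eq] using hPQ

end MoebiusPullback

section MahlerMeasure

lemma mahlerMeasure_C_mul_X_add_C_eq_max (a b : ℂ) :
    (C a * X + C b).mahlerMeasure = max ‖a‖ ‖b‖ := by
  rcases eq_or_ne a 0 with rfl | ha
  · simp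
  · rw [mahlerMeasure_C_mul_X_add_C ha]

lemma abs_add_abs_div_two_pow_mul_norm_eval_le (a b : ℝ) (g : ℂ[X]) :
    ((|a| + |b|) / 2) ^ g.natDegree * (‖g.eval Complex.I‖ * ‖g.eval (-Complex.I)‖) ≤
      g.mahlerMeasure * (moebiusPullback (b : ℂ) a a (-b) g).mahlerMeasure := by
  rcases eq_or_ne g 0 with rfl | hg
  · simp
  have h_splits : g.Splits := IsAlgClosed.splits g
  induction h_splits using Submonoid.closure_induction with
  | mem g h =>
    obtain ⟨c, rfl⟩ | ⟨w, rfl⟩ := h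
    · simp
    · have h_norm : ‖(Complex.I + w) * (-Complex.I + w)‖ = ‖w ^ 2 + 1‖ := by
        congr 1
        linear_combination -Complex.I_sq
      rw [moebiusPullback_X_add_C, mahlerMeasure_C_mul_X_add_C_eq_max, mahlerMeasure_X_add_C,
        natDegree_X_add_C, pow_one, eval_add, eval_add, eval_X, eval_X, eval_C, eval_C,
        ← norm_mul, h_norm]
      simpa only [mul_comm w, mul_neg, neg_mul, ← sub_eq_add_neg] using
        abs_add_abs_div_two_mul_norm_sq_add_one_le a b w
  | one => simp [show moebiusPullback (b : ℂ) a a (-b) 1 = 1 from moebiusPullback_C _ _ _ _ 1]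
  | mul g h _ _ ihg ihh =>
    obtain ⟨hg0, hh0⟩ := mul_ne_zero_iff.1 hg
    rw [moebiusPullback_mul _ _ _ _ hg0 hh0, mahlerMeasure_mul, mahlerMeasure_mul,
      natDegree_mul hg0 hh0]
    calc _ = (((|a| + |b|) / 2) ^ g.natDegree * (‖g.eval Complex.I‖ * ‖g.eval (-Complex.I)‖)) *
          (((|a| + |b|) / 2) ^ h.natDegree * (‖h.eval Complex.I‖ * ‖h.eval (-Complex.I)‖)) := by
          simp only [eval_mul, norm_mul, pow_add]; ring
      _ ≤ _ := mul_le_mul (ihg hg0) (ihh hh0) (by positivity)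
          (mul_nonneg (mahlerMeasure_nonneg _) (mahlerMeasure_nonneg _))
      _ = _ := by ring

lemma mahlerMeasure_eq_mahlerMeasure_map (f : ℤ[X]) :
    _root_.mahlerMeasure f = (f.map (Int.castRingHom ℂ)).mahlerMeasure := by
  simp only [mahlerMeasure_eq_leadingCoeff_mul_prod_roots, _root_.mahlerMeasure,
    leadingCoeff_map_of_injective (Int.castRingHom ℂ).injective_int, eq_intCast,
    Complex.norm_intCast, max_comm]

lemma mahlerMeasure_pos {f : ℤ[X]} (hf : f ≠ 0) : 0 < _root_.mahlerMeasure f := by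
  rw [mahlerMeasure_eq_mahlerMeasure_map]
  exact mahlerMeasure_pos_of_ne_zero
    ((Polynomial.map_ne_zero_iff (RingHom.injective_int _)).2 hf)

end MahlerMeasure

section Content

lemma algebraMap_dvd_aeval_mul_aeval {R A : Type*} [CommRing R] [CommRing A] [Algebra R A]
    {f : R[X]} {m r D : R} (h : C m ∣ f.comp (C D * X + C r)) {ω ω' : A}
    (hD : ω * ω' = algebraMap R A D) (s t : A) :
    algebraMap R A m ∣
      aeval (ω * s + algebraMap R A r) f * aeval (ω' * t + algebraMap R A r) f := by
  have h_coeff (k : ℕ) : m ∣ (taylor r f).coeff k * D ^ k := by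
    have h_comp : (taylor r f).comp (C D * X) = f.comp (C D * X + C r) := by
      simp [taylor_apply, comp_assoc]
    rw [← comp_C_mul_X_coeff, h_comp]
    exact (C_dvd_iff_dvd_coeff _ _).1 h k
  have h_dvd (k : ℕ) : algebraMap R A m ∣ algebraMap R A ((taylor r f).coeff k) * (ω * ω') ^ k := by
    rw [hD, ← map_pow, ← map_mul]
    exact map_dvd _ (h_coeff k)
  have h_eval (x : A) : aeval (x + algebraMap R A r) f = aeval x (taylor r f) := by
    simp [taylor_apply, aeval_comp]
  rw [h_eval, h_eval, aeval_eq_sum_range, aeval_eq_sum_range, Finset.sum_mul_sum]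
  refine Finset.dvd_sum fun j _ ↦ Finset.dvd_sum fun k _ ↦ ?_
  rw [Algebra.smul_def, Algebra.smul_def]
  rcases le_total j k with hjk | hkj
  · obtain ⟨l, rfl⟩ := Nat.exists_eq_add_of_le hjk
    refine (h_dvd j).trans
      ⟨algebraMap R A ((taylor r f).coeff (j + l)) * s ^ j * ω' ^ l * t ^ (j + l), ?_⟩
    ring
  · obtain ⟨l, rfl⟩ := Nat.exists_eq_add_of_le hkj
    refine (h_dvd k).trans
      ⟨algebraMap R A ((taylor r f).coeff (k + l)) * t ^ k * ω ^ l * s ^ (k + l), ?_⟩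
    ring

/-- If `u p + v q = 1`, then `i - r` and `-i - r` with `r = u q - v p` are multiples of `p + q i`
and of `p - q i`, whose product is `p ^ 2 + q ^ 2`, minus the determinant of the transformation. -/
lemma intCast_dvd_aeval_mul_aeval_of_C_dvd_moebiusPullback {p q m : ℤ} (hpq : IsCoprime p q)
    {f : ℤ[X]} (h : C m ∣ moebiusPullback q p p (-q) f) :
    (m : GaussianInt) ∣ aeval (⟨0, 1⟩ : GaussianInt) f * aeval (⟨0, -1⟩ : GaussianInt) f := by
  obtain ⟨u, v, huv⟩ := hpq
  have h_comp : C m ∣ f.comp (C (p ^ 2 + q ^ 2) * X + C (u * q - v * p)) := by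
    have h_unit : C p * (C q * X + C u) + C (-q) * (C p * X - C v) = 1 := by
      rw [← C_1, ← huv]
      simp only [map_add, map_mul, map_neg]
      ring
    have h_arg : C q * (C q * X + C u) + C p * (C p * X - C v) =
        C (p ^ 2 + q ^ 2) * X + C (u * q - v * p) := by
      simp only [map_add, map_sub, map_mul, map_pow]
      ring
    exact h_arg ▸ C_dvd_comp_of_C_dvd_moebiusPullback q p p (-q) h h_unit
  have h_det : (⟨p, q⟩ * ⟨p, -q⟩ : GaussianInt) = algebraMap ℤ GaussianInt (p ^ 2 + q ^ 2) := by
    rw [algebraMap_int_eq, eq_intCast]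
    exact Zsqrtd.ext (by simp [pow_two]) (by simp [pow_two, mul_comm])
  have hI : (⟨p, q⟩ * ⟨v, u⟩ + algebraMap ℤ GaussianInt (u * q - v * p) : GaussianInt) =
      ⟨0, 1⟩ := by
    refine Zsqrtd.ext ?_ ?_
    · simp only [Zsqrtd.re_add, Zsqrtd.re_mul, algebraMap_int_eq, eq_intCast, Zsqrtd.re_intCast]
      ring
    · simp only [Zsqrtd.im_add, Zsqrtd.im_mul, algebraMap_int_eq, eq_intCast, Zsqrtd.im_intCast]
      linear_combination huv
  have hI' : (⟨p, -q⟩ * ⟨v, -u⟩ + algebraMap ℤ GaussianInt (u * q - v * p) : GaussianInt) =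
      ⟨0, -1⟩ := by
    refine Zsqrtd.ext ?_ ?_
    · simp only [Zsqrtd.re_add, Zsqrtd.re_mul, algebraMap_int_eq, eq_intCast, Zsqrtd.re_intCast]
      ring
    · simp only [Zsqrtd.im_add, Zsqrtd.im_mul, algebraMap_int_eq, eq_intCast, Zsqrtd.im_intCast]
      linear_combination -huv
  rw [← hI, ← hI']
  exact algebraMap_dvd_aeval_mul_aeval h_comp h_det _ _

lemma one_le_norm_toComplex {z : GaussianInt} (hz : z ≠ 0) : 1 ≤ ‖GaussianInt.toComplex z‖ := by
  rw [← one_le_sq_iff₀ (norm_nonneg _), Complex.sq_norm, ← GaussianInt.intCast_real_norm]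
  exact_mod_cast GaussianInt.norm_pos.2 hz

lemma abs_le_norm_aeval_I_mul_norm_aeval_neg_I {p q m : ℤ} (hpq : IsCoprime p q) {f : ℤ[X]}
    (h : C m ∣ moebiusPullback q p p (-q) f) (hI : aeval Complex.I f ≠ 0)
    (hI' : aeval (-Complex.I) f ≠ 0) :
    |(m : ℝ)| ≤ ‖aeval Complex.I f‖ * ‖aeval (-Complex.I) f‖ := by
  have h_aeval (z : GaussianInt) :
      aeval (GaussianInt.toComplex z) f = GaussianInt.toComplex (aeval z f) :=
    aeval_algHom_apply GaussianInt.toComplex.toIntAlgHom z f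
  have hI_eq : GaussianInt.toComplex ⟨0, 1⟩ = Complex.I := by simp [GaussianInt.toComplex_def]
  have hI'_eq : GaussianInt.toComplex ⟨0, -1⟩ = -Complex.I := by simp [GaussianInt.toComplex_def]
  obtain ⟨z, hz⟩ := intCast_dvd_aeval_mul_aeval_of_C_dvd_moebiusPullback hpq h
  have h_prod : (m : ℂ) * GaussianInt.toComplex z = aeval Complex.I f * aeval (-Complex.I) f := by
    rw [← hI'_eq, ← hI_eq, h_aeval, h_aeval, ← map_mul, hz, map_mul, map_intCast]
  have hz0 : z ≠ 0 := by
    rintro rfl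
    exact mul_ne_zero hI hI' (by rw [← h_prod, map_zero, mul_zero])
  rw [← norm_mul, ← h_prod, norm_mul, Complex.norm_intCast]
  exact le_mul_of_one_le_right (abs_nonneg _) (one_le_norm_toComplex hz0)

lemma abs_add_abs_div_two_pow_le {p q m : ℤ} (hpq : IsCoprime p q) {f g : ℤ[X]}
    (h : moebiusPullback q p p (-q) f = C m * g) (hI : aeval Complex.I f ≠ 0)
    (hI' : aeval (-Complex.I) f ≠ 0) :
    ((|(p : ℝ)| + |(q : ℝ)|) / 2) ^ f.natDegree ≤
      _root_.mahlerMeasure f * _root_.mahlerMeasure g := by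
  have h_inj : Function.Injective (Int.castRingHom ℂ) := RingHom.injective_int _
  have h_measure : (moebiusPullback (q : ℂ) p p (-q) (f.map (Int.castRingHom ℂ))).mahlerMeasure =
      |(m : ℝ)| * _root_.mahlerMeasure g := by
    have h_map := map_moebiusPullback q p p (-q) h_inj f
    rw [h, Polynomial.map_mul, map_C] at h_map
    simp only [map_neg, eq_intCast] at h_map
    rw [← h_map, mahlerMeasure_mul, mahlerMeasure_const, Complex.norm_intCast,
      mahlerMeasure_eq_mahlerMeasure_map]
  have h_arch := abs_add_abs_div_two_pow_mul_norm_eval_le p q (f.map (Int.castRingHom ℂ))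
  push_cast at h_arch
  rw [h_measure, natDegree_map_eq_of_injective h_inj, ← mahlerMeasure_eq_mahlerMeasure_map,
    eval_map, eval_map] at h_arch
  have h_content := abs_le_norm_aeval_I_mul_norm_aeval_neg_I hpq ⟨g, h⟩ hI hI'
  have h_nonneg : 0 ≤ _root_.mahlerMeasure f * _root_.mahlerMeasure g := by
    rw [mahlerMeasure_eq_mahlerMeasure_map, mahlerMeasure_eq_mahlerMeasure_map]
    exact mul_nonneg (mahlerMeasure_nonneg _) (mahlerMeasure_nonneg _)
  refine le_of_mul_le_mul_right ?_ (mul_pos (norm_pos_iff.2 hI) (norm_pos_iff.2 hI'))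
  calc _ ≤ _root_.mahlerMeasure f * (|(m : ℝ)| * _root_.mahlerMeasure g) := h_arch
    _ = _root_.mahlerMeasure f * _root_.mahlerMeasure g * |(m : ℝ)| := by ring
    _ ≤ _ := mul_le_mul_of_nonneg_left h_content h_nonneg

end Content

section IntMinpoly

variable {α z : ℂ}

lemma isPrimitive_intMinpoly (α : ℂ) : (intMinpoly α).IsPrimitive :=
  isPrimitive_primPart _

lemma intMinpoly_ne_zero (α : ℂ) : intMinpoly α ≠ 0 :=
  (isPrimitive_intMinpoly α).ne_zero

lemma associated_map_intMinpoly (hα : IsAlgebraic ℚ α) :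
    Associated ((intMinpoly α).map (Int.castRingHom ℚ)) (minpoly ℚ α) := by
  obtain ⟨b, hb, h⟩ := IsLocalization.integerNormalization_spec (nonZeroDivisors ℤ) (minpoly ℚ α)
  set N := IsLocalization.integerNormalization (nonZeroDivisors ℤ) (minpoly ℚ α) with hN
  have hN0 : N ≠ 0 := by
    rw [hN, Ne, IsFractionRing.integerNormalization_eq_zero_iff]
    exact minpoly.ne_zero hα.isIntegral
  have h_unit {c : ℤ} (hc : c ≠ 0) : IsUnit (C (c : ℚ)) :=
    isUnit_C.2 (Int.cast_ne_zero.2 hc).isUnit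
  have h_eq : C (N.content : ℚ) * (intMinpoly α).map (Int.castRingHom ℚ) =
      C (b : ℚ) * minpoly ℚ α := by
    rw [← smul_eq_C_mul (b : ℚ), Int.cast_smul_eq_zsmul, ← h, algebraMap_int_eq]
    conv_rhs => rw [N.eq_C_content_mul_primPart, Polynomial.map_mul, map_C, eq_intCast]
    rfl
  rw [← associated_isUnit_mul_left_iff (h_unit (content_eq_zero_iff.not.2 hN0)), h_eq]
  exact associated_unit_mul_left _ _ (h_unit (nonZeroDivisors.ne_zero hb))

lemma natDegree_intMinpoly (hα : IsAlgebraic ℚ α) :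
    (intMinpoly α).natDegree = (minpoly ℚ α).natDegree := by
  rw [← natDegree_map_eq_of_injective (RingHom.injective_int (Int.castRingHom ℚ))]
  exact natDegree_eq_of_degree_eq (degree_eq_degree_of_associated (associated_map_intMinpoly hα))

lemma intMinpoly_dvd_iff (hα : IsAlgebraic ℚ α) {F : ℤ[X]} :
    intMinpoly α ∣ F ↔ aeval α F = 0 := by
  rw [IsPrimitive.Int.dvd_iff_map_cast_dvd_map_cast _ _ (isPrimitive_intMinpoly α),
    (associated_map_intMinpoly hα).dvd_iff_dvd_left, minpoly.dvd_iff,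
    ← algebraMap_int_eq, aeval_map_algebraMap]

lemma minpoly_eq_of_aeval_intMinpoly_eq_zero (hα : IsAlgebraic ℚ α)
    (hz : aeval z (intMinpoly α) = 0) : minpoly ℚ α = minpoly ℚ z := by
  refine minpoly.eq_of_irreducible_of_monic (minpoly.irreducible hα.isIntegral) ?_
    (minpoly.monic hα.isIntegral)
  obtain ⟨G, hG⟩ := (associated_map_intMinpoly hα).dvd
  rw [hG, map_mul, ← algebraMap_int_eq, aeval_map_algebraMap, hz, zero_mul]

lemma aeval_intMinpoly_ne_zero_of_sq_eq_neg_one (hα : IsAlgebraic ℚ α) (hα_sq : α ^ 2 ≠ -1)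
    (hz : z ^ 2 = -1) : aeval z (intMinpoly α) ≠ 0 := by
  intro h
  have h_dvd : minpoly ℚ z ∣ X ^ 2 + 1 := minpoly.dvd ℚ z (by simp [hz])
  rw [← minpoly_eq_of_aeval_intMinpoly_eq_zero hα h, minpoly.dvd_iff] at h_dvd
  exact hα_sq (eq_neg_of_add_eq_zero_left (by simpa using h_dvd))

lemma exists_eq_C_mul_intMinpoly (hα : IsAlgebraic ℚ α) {F : ℤ[X]} (hF : aeval α F = 0)
    (h_deg : F.natDegree ≤ (minpoly ℚ α).natDegree) : ∃ c : ℤ, F = C c * intMinpoly α := by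
  obtain ⟨G, rfl⟩ := (intMinpoly_dvd_iff hα).2 hF
  rcases eq_or_ne G 0 with rfl | hG
  · exact ⟨0, by simp⟩
  rw [natDegree_mul (intMinpoly_ne_zero α) hG, natDegree_intMinpoly hα, add_le_iff_nonpos_right,
    nonpos_iff_eq_zero, natDegree_eq_zero] at h_deg
  obtain ⟨c, rfl⟩ := h_deg
  exact ⟨c, mul_comm _ _⟩

end IntMinpoly

section Height

lemma isPrimitive_C_mul_X_add_C {R : Type*} [CommRing R] {a b : R} (hab : IsCoprime a b) :
    (C a * X + C b).IsPrimitive := by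
  intro r hr
  have h_coeff := (C_dvd_iff_dvd_coeff r _).1 hr
  exact hab.isUnit_of_dvd' (by simpa using h_coeff 1) (by simpa using h_coeff 0)

lemma mahlerMeasure_intMinpoly_eq_of_isPrimitive {α : ℂ} (hα : IsAlgebraic ℚ α) {F : ℤ[X]}
    (hF : F.IsPrimitive) (h_root : aeval α F = 0)
    (h_deg : F.natDegree ≤ (minpoly ℚ α).natDegree) :
    _root_.mahlerMeasure (intMinpoly α) = _root_.mahlerMeasure F := by
  obtain ⟨c, rfl⟩ := exists_eq_C_mul_intMinpoly hα h_root h_deg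
  have hc : |(c : ℝ)| = 1 := by
    exact_mod_cast Int.isUnit_iff_abs_eq.1 (hF c (dvd_mul_right _ _))
  rw [mahlerMeasure_eq_mahlerMeasure_map (C c * _), Polynomial.map_mul, mahlerMeasure_mul, map_C,
    mahlerMeasure_const, eq_intCast, Complex.norm_intCast, hc, one_mul,
    mahlerMeasure_eq_mahlerMeasure_map]

lemma height_div_of_isCoprime_of_ne_zero {a b : ℤ} (hab : IsCoprime a b) (hb : b ≠ 0) :
    height ((a : ℂ) / b) = Real.log (max |(a : ℝ)| |(b : ℝ)|) := by
  have h_map : algebraMap ℚ ℂ ((a : ℚ) / b) = (a : ℂ) / b := by simp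
  have h_natDegree : (minpoly ℚ ((a : ℂ) / b)).natDegree = 1 := by
    rw [← h_map, minpoly.eq_X_sub_C, natDegree_X_sub_C]
  have h_root : aeval ((a : ℂ) / b) (C b * X + C (-a)) = 0 := by
    simp [mul_div_cancel₀ (a : ℂ) (Int.cast_ne_zero.2 hb)]
  rw [height, h_natDegree, mahlerMeasure_intMinpoly_eq_of_isPrimitive
      (h_map ▸ isAlgebraic_algebraMap _) (isPrimitive_C_mul_X_add_C hab.symm.neg_right) h_root
      (by rw [h_natDegree, natDegree_linear hb]), mahlerMeasure_eq_mahlerMeasure_map,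
    Polynomial.map_add, Polynomial.map_mul, map_C, map_C, map_X,
    mahlerMeasure_C_mul_X_add_C_eq_max, eq_intCast, eq_intCast, Complex.norm_intCast,
    Complex.norm_intCast, Int.cast_neg, abs_neg, max_comm, Nat.cast_one, div_one]

@[simp]
lemma height_zero : height 0 = 0 := by
  simpa using height_div_of_isCoprime_of_ne_zero (isCoprime_one_right (x := (0 : ℤ))) one_ne_zero

lemma height_div_of_isCoprime {a b : ℤ} (hab : IsCoprime a b) :
    height ((a : ℂ) / b) = Real.log (max |(a : ℝ)| |(b : ℝ)|) := by
  rcases eq_or_ne b 0 with rfl | hb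
  · have ha : |a| = 1 := Int.isUnit_iff_abs_eq.1 (isCoprime_zero_right.1 hab)
    simp [← Int.cast_abs, ha]
  · exact height_div_of_isCoprime_of_ne_zero hab hb

end Height

section MoebiusInvolution

/-- The transformation `σ z = (q z + p) / (p z - q)`, which interchanges `i` and `-i`. At the pole
`z = q / p` division by zero gives `0` instead of `∞`. -/
def moebiusInvolution {K : Type*} [Field K] (p q z : K) : K :=
  (q * z + p) / (p * z - q)

lemma mul_moebiusInvolution_sub {K : Type*} [Field K] {p q z : K} (hz : p * z - q ≠ 0) :
    p * moebiusInvolution p q z - q = (p ^ 2 + q ^ 2) / (p * z - q) := by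
  rw [moebiusInvolution, eq_div_iff hz, sub_mul, mul_assoc, div_mul_cancel₀ _ hz]
  ring

lemma moebiusInvolution_moebiusInvolution {K : Type*} [Field K] {p q z : K}
    (hpq : p ^ 2 + q ^ 2 ≠ 0) (hz : p * z - q ≠ 0) :
    moebiusInvolution p q (moebiusInvolution p q z) = z := by
  have h_num : q * moebiusInvolution p q z + p = (p ^ 2 + q ^ 2) * z / (p * z - q) := by
    rw [moebiusInvolution, eq_div_iff hz, add_mul, mul_assoc, div_mul_cancel₀ _ hz]
    ring
  rw [moebiusInvolution, mul_moebiusInvolution_sub hz, h_num, div_div_div_cancel_right₀ hz,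
    mul_div_cancel_left₀ _ hpq]

lemma aeval_moebiusInvolution_moebiusPullback {R K : Type*} [CommRing R] [Field K] [Algebra R K]
    {p q : R} {α : K} (hpq : algebraMap R K p ^ 2 + algebraMap R K q ^ 2 ≠ 0)
    (h_pole : algebraMap R K p * α - algebraMap R K q ≠ 0) {f : R[X]} (hf : aeval α f = 0) :
    aeval (moebiusInvolution (algebraMap R K p) (algebraMap R K q) α)
      (moebiusPullback q p p (-q) f) = 0 := by
  have h_denom : algebraMap R K p * moebiusInvolution (algebraMap R K p) (algebraMap R K q) α +
      algebraMap R K (-q) ≠ 0 := by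
    rw [map_neg, ← sub_eq_add_neg, mul_moebiusInvolution_sub h_pole]
    exact div_ne_zero hpq h_pole
  have h_inv := moebiusInvolution_moebiusInvolution hpq h_pole
  rw [moebiusInvolution, sub_eq_add_neg, ← map_neg] at h_inv
  rw [aeval_moebiusPullback _ _ _ _ _ h_denom, h_inv, hf, zero_mul]

variable {K L : Type*} [Field K] [Field L] [Algebra K L] {p q : K} {α : L}

open IntermediateField

lemma moebiusInvolution_mem {F : IntermediateField K L} (hα : α ∈ F) :
    moebiusInvolution (algebraMap K L p) (algebraMap K L q) α ∈ F :=
  div_mem (add_mem (mul_mem (F.algebraMap_mem q) hα) (F.algebraMap_mem p))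
    (sub_mem (mul_mem (F.algebraMap_mem p) hα) (F.algebraMap_mem q))

lemma adjoin_moebiusInvolution (hpq : p ^ 2 + q ^ 2 ≠ 0)
    (hα : algebraMap K L p * α - algebraMap K L q ≠ 0) :
    K⟮moebiusInvolution (algebraMap K L p) (algebraMap K L q) α⟯ = K⟮α⟯ := by
  refine le_antisymm ?_ ?_ <;> rw [adjoin_simple_le_iff]
  · exact moebiusInvolution_mem (mem_adjoin_simple_self K α)
  · have hpq' : algebraMap K L p ^ 2 + algebraMap K L q ^ 2 ≠ 0 := by
      rwa [← map_pow, ← map_pow, ← map_add, _root_.map_ne_zero]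
    have h_mem := moebiusInvolution_mem (p := p) (q := q) (mem_adjoin_simple_self K
      (moebiusInvolution (algebraMap K L p) (algebraMap K L q) α))
    rwa [moebiusInvolution_moebiusInvolution hpq' hα] at h_mem

lemma isIntegral_moebiusInvolution (hα : IsIntegral K α) :
    IsIntegral K (moebiusInvolution (algebraMap K L p) (algebraMap K L q) α) :=
  have := isAlgebraic_adjoin_simple hα
  isIntegral_iff.1 (Algebra.IsIntegral.isIntegral
    (⟨_, moebiusInvolution_mem (mem_adjoin_simple_self K α)⟩ : K⟮α⟯))

lemma natDegree_minpoly_moebiusInvolution (h_int : IsIntegral K α) (hpq : p ^ 2 + q ^ 2 ≠ 0)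
    (hα : algebraMap K L p * α - algebraMap K L q ≠ 0) :
    (minpoly K (moebiusInvolution (algebraMap K L p) (algebraMap K L q) α)).natDegree =
      (minpoly K α).natDegree := by
  rw [← adjoin.finrank h_int, ← adjoin.finrank (isIntegral_moebiusInvolution h_int),
    adjoin_moebiusInvolution hpq hα]

end MoebiusInvolution

section LowerBound

variable {p q : ℤ} {α : ℂ}

lemma isAlgebraic_moebiusInvolution_intCast (hα : IsAlgebraic ℚ α) :
    IsAlgebraic ℚ (moebiusInvolution (p : ℂ) q α) := by
  simpa using (isIntegral_moebiusInvolution (p := (p : ℚ)) (q := q) hα.isIntegral).isAlgebraic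

lemma natDegree_minpoly_moebiusInvolution_intCast (hpq : p ^ 2 + q ^ 2 ≠ 0) (hα : IsAlgebraic ℚ α)
    (h_pole : (p : ℂ) * α - q ≠ 0) :
    (minpoly ℚ (moebiusInvolution (p : ℂ) q α)).natDegree = (minpoly ℚ α).natDegree := by
  simpa using natDegree_minpoly_moebiusInvolution (p := (p : ℚ)) (q := q) hα.isIntegral
    (by exact_mod_cast hpq) (by simpa using h_pole)

lemma exists_moebiusPullback_intMinpoly_eq (hpq : p ^ 2 + q ^ 2 ≠ 0) (hα : IsAlgebraic ℚ α)
    (h_pole : (p : ℂ) * α - q ≠ 0) :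
    ∃ m : ℤ, moebiusPullback q p p (-q) (intMinpoly α) =
      C m * intMinpoly (moebiusInvolution (p : ℂ) q α) := by
  have hpq' : (p : ℂ) ^ 2 + (q : ℂ) ^ 2 ≠ 0 := by exact_mod_cast hpq
  have h_root : aeval α (intMinpoly α) = 0 := (intMinpoly_dvd_iff hα).1 dvd_rfl
  have h_root' := aeval_moebiusInvolution_moebiusPullback (p := p) (q := q)
    (by simpa only [algebraMap_int_eq, eq_intCast] using hpq')
    (by simpa only [algebraMap_int_eq, eq_intCast] using h_pole) h_root
  rw [algebraMap_int_eq, eq_intCast, eq_intCast] at h_root'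
  refine exists_eq_C_mul_intMinpoly (isAlgebraic_moebiusInvolution_intCast hα) h_root' ?_
  rw [natDegree_minpoly_moebiusInvolution_intCast hpq hα h_pole, ← natDegree_intMinpoly hα]
  exact natDegree_moebiusPullback_le _ _ _ _ _

lemma log_le_height_add_height_moebiusInvolution_of_ne_zero (hpq : IsCoprime p q)
    (hα : IsAlgebraic ℚ α) (hα_sq : α ^ 2 ≠ -1) (h_pole : (p : ℂ) * α - q ≠ 0) :
    Real.log ((|(p : ℝ)| + |(q : ℝ)|) / 2) ≤
      height α + height (moebiusInvolution (p : ℂ) q α) := by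
  obtain ⟨m, hm⟩ := exists_moebiusPullback_intMinpoly_eq hpq.sq_add_sq_ne_zero hα h_pole
  have h_base : 0 < (|(p : ℝ)| + |(q : ℝ)|) / 2 := by
    rcases hpq.ne_zero_or_ne_zero with h | h <;> positivity
  have h_deg : 0 < ((minpoly ℚ α).natDegree : ℝ) :=
    Nat.cast_pos.2 (minpoly.natDegree_pos hα.isIntegral)
  have h_pow := abs_add_abs_div_two_pow_le hpq hm
    (aeval_intMinpoly_ne_zero_of_sq_eq_neg_one hα hα_sq Complex.I_sq)
    (aeval_intMinpoly_ne_zero_of_sq_eq_neg_one hα hα_sq (by rw [neg_sq, Complex.I_sq]))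
  rw [height, height, natDegree_minpoly_moebiusInvolution_intCast hpq.sq_add_sq_ne_zero hα h_pole,
    ← add_div,
    ← Real.log_mul (mahlerMeasure_pos (intMinpoly_ne_zero _)).ne'
      (mahlerMeasure_pos (intMinpoly_ne_zero _)).ne', le_div_iff₀' h_deg,
    ← natDegree_intMinpoly hα, ← Real.log_pow]
  exact Real.log_le_log (pow_pos h_base _) h_pow

lemma log_le_height_add_height_moebiusInvolution_of_eq_zero (hpq : IsCoprime p q)
    (h_pole : (p : ℂ) * α - q = 0) :
    Real.log ((|(p : ℝ)| + |(q : ℝ)|) / 2) ≤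
      height α + height (moebiusInvolution (p : ℂ) q α) := by
  have hp : p ≠ 0 := by
    rintro rfl
    exact hpq.ne_zero_or_ne_zero.elim (· rfl) (· (by simpa using h_pole))
  have hα : α = (q : ℂ) / p := by
    rw [eq_div_iff (Int.cast_ne_zero.2 hp), mul_comm, sub_eq_zero.1 h_pole]
  rw [moebiusInvolution, h_pole, div_zero, height_zero, add_zero, hα,
    height_div_of_isCoprime hpq.symm]
  refine Real.log_le_log (by positivity) ?_
  linarith only [le_max_left |(q : ℝ)| |(p : ℝ)|, le_max_right |(q : ℝ)| |(p : ℝ)|]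

theorem log_le_height_add_height_moebiusInvolution (hpq : IsCoprime p q) (hα : IsAlgebraic ℚ α)
    (hα_sq : α ^ 2 ≠ -1) :
    Real.log ((|(p : ℝ)| + |(q : ℝ)|) / 2) ≤
      height α + height (moebiusInvolution (p : ℂ) q α) :=
  (eq_or_ne ((p : ℂ) * α - q) 0).elim (log_le_height_add_height_moebiusInvolution_of_eq_zero hpq)
    (log_le_height_add_height_moebiusInvolution_of_ne_zero hpq hα hα_sq)

end LowerBound

section Equality

lemma exists_eq_add_eq_sub_of_isCoprime {p q : ℤ} (hpq : IsCoprime p q) (h_even : 2 ∣ p + q) :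
    ∃ a b : ℤ, IsCoprime a b ∧ p = a + b ∧ q = a - b := by
  obtain ⟨a, ha⟩ := h_even
  obtain ⟨u, v, huv⟩ := hpq
  exact ⟨a, p - a, ⟨u + v, u - v, by rw [← huv]; linear_combination -v * ha⟩,
    by ring, by linear_combination ha⟩

lemma max_abs_abs_eq_abs_add_abs_div_two (a b : ℝ) : max |a| |b| = (|a + b| + |a - b|) / 2 := by
  grind

lemma height_intCast_of_isUnit {u : ℤ} (hu : IsUnit u) : height (u : ℂ) = 0 := by
  have h_abs : |(u : ℝ)| = 1 := by exact_mod_cast Int.isUnit_iff_abs_eq.1 hu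
  simpa [h_abs] using height_div_of_isCoprime (isCoprime_one_right (x := u))

variable {p q : ℤ}

theorem height_one_add_height_moebiusInvolution_one (hpq : IsCoprime p q) (h_even : 2 ∣ p + q) :
    height 1 + height (moebiusInvolution (p : ℂ) q 1) =
      Real.log ((|(p : ℝ)| + |(q : ℝ)|) / 2) := by
  obtain ⟨a, b, hab, rfl, rfl⟩ := exists_eq_add_eq_sub_of_isCoprime hpq h_even
  have h_val : moebiusInvolution ((a + b : ℤ) : ℂ) (a - b : ℤ) 1 = (a : ℂ) / b := by
    rw [moebiusInvolution, ← mul_div_mul_left (a : ℂ) b two_ne_zero]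
    push_cast
    ring_nf
  rw [h_val, height_div_of_isCoprime hab, max_abs_abs_eq_abs_add_abs_div_two, Int.cast_add,
    Int.cast_sub, show height 1 = 0 by simpa using height_intCast_of_isUnit isUnit_one, zero_add]

theorem height_neg_one_add_height_moebiusInvolution_neg_one (hpq : IsCoprime p q)
    (h_even : 2 ∣ p + q) :
    height (-1) + height (moebiusInvolution (p : ℂ) q (-1)) =
      Real.log ((|(p : ℝ)| + |(q : ℝ)|) / 2) := by
  obtain ⟨a, b, hab, rfl, rfl⟩ := exists_eq_add_eq_sub_of_isCoprime hpq h_even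
  have h_val : moebiusInvolution ((a + b : ℤ) : ℂ) (a - b : ℤ) (-1) = (b : ℂ) / (-a : ℤ) := by
    rw [moebiusInvolution, ← mul_div_mul_left (b : ℂ) _ two_ne_zero]
    push_cast
    ring_nf
  rw [h_val, height_div_of_isCoprime hab.symm.neg_right, Int.cast_neg, abs_neg, max_comm,
    max_abs_abs_eq_abs_add_abs_div_two, Int.cast_add, Int.cast_sub,
    show height (-1) = 0 by simpa using height_intCast_of_isUnit isUnit_one.neg, zero_add]

end Equality

/-- Row 5 of Table 1: for `σ(z) = (qz + p)/(pz - q)` (an involution interchanging `i` and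
`-i`) with `p, q` coprime, `q > 0`, `p ≠ 0`: for every algebraic `α ∉ {i, -i}` one has
`h(α) + h(σ(α)) ≥ log((|p| + q)/2)`, with equality at `α = 1` and `α = -1`
when `p + q` is even. -/
theorem table1_row5 (p q : ℤ) (hpq : IsCoprime p q) (hq : 0 < q) (hp : p ≠ 0) :
    (∀ α : ℂ, IsAlgebraic ℚ α → α ≠ Complex.I → α ≠ -Complex.I →
      height α + height (((q : ℂ) * α + (p : ℂ)) / ((p : ℂ) * α - (q : ℂ)))
        ≥ Real.log (((|p| : ℝ) + (q : ℝ)) / 2)) ∧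
    (2 ∣ p + q →
      height (1 : ℂ) + height (((q : ℂ) * 1 + (p : ℂ)) / ((p : ℂ) * 1 - (q : ℂ)))
          = Real.log (((|p| : ℝ) + (q : ℝ)) / 2) ∧
      height (-1 : ℂ) + height (((q : ℂ) * (-1) + (p : ℂ)) / ((p : ℂ) * (-1) - (q : ℂ)))
          = Real.log (((|p| : ℝ) + (q : ℝ)) / 2)) := by
  have hq_abs : (q : ℝ) = |(q : ℝ)| := (abs_of_pos (Int.cast_pos.2 hq)).symm
  rw [hq_abs]
  refine ⟨fun α hα hI hI' ↦ ?_, fun h_even ↦ ⟨?_, ?_⟩⟩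
  · have hα_sq : α ^ 2 ≠ -1 := by
      rw [← Complex.I_sq]
      exact fun h ↦ (sq_eq_sq_iff_eq_or_eq_neg.1 h).elim hI hI'
    exact log_le_height_add_height_moebiusInvolution hpq hα hα_sq
  · exact height_one_add_height_moebiusInvolution_one hpq h_even
  · exact height_neg_one_add_height_moebiusInvolution_neg_one hpq h_even
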